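/- arXiv:2103.15000 — 3 statements merged into one kernel-verified Lean document; each statement's English description precedes it below -/
import Mathlib

section
/- Second Fundamental Theorem for the GFD of arbitrary order (Riemann–Liouville case): Let n ∈ ℕ and let (κ, k) be a pair of kernels from L_n. Then for every f of the form f = κ * φ with φ ∈ C_{−1}(0,∞) and every t > 0, (I_{(κ)} D_{(k)} f)(t) = f(t). -/
open Real MeasureTheory Set Filter Topology

/-- The Laplace convolution `(f * g)(t) = ∫₀ᵗ f(t-τ) g(τ) dτ`. -/
noncomputable def lconv (f g : ℝ → ℝ) : ℝ → ℝ :=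
  fun t => ∫ τ in (0:ℝ)..t, f (t - τ) * g τ

/-- The space `C_{-1}(0,∞)`: functions of the form `t^p f₁(t)` with `p > -1`
and `f₁` continuous on `[0,∞)`. -/
def Cm1 (f : ℝ → ℝ) : Prop :=
  ∃ p : ℝ, -1 < p ∧ ∃ f₁ : ℝ → ℝ, ContinuousOn f₁ (Set.Ici 0) ∧
    ∀ t : ℝ, 0 < t → f t = t ^ p * f₁ t

/-- The subspace `C_{-1,0}(0,∞)`: functions of the form `t^p f₁(t)` with `-1 < p < 0`
and `f₁` continuous on `[0,∞)`. -/
def Cm10 (f : ℝ → ℝ) : Prop :=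
  ∃ p : ℝ, -1 < p ∧ p < 0 ∧ ∃ f₁ : ℝ → ℝ, ContinuousOn f₁ (Set.Ici 0) ∧
    ∀ t : ℝ, 0 < t → f t = t ^ p * f₁ t

lemma beta_key {p q : ℝ} (hp : -1 < p) (hq : -1 < q) : ∃ B : ℝ, 0 ≤ B ∧ ∀ x : ℝ,
    IntegrableOn (fun s : ℝ => s ^ p * (x - s) ^ q) (Ioo 0 x) ∧
    (0 < x → ∫ s in Ioo 0 x, s ^ p * (x - s) ^ q = B * x ^ (p + q + 1)) := by
  have h1 : IntegrableOn (fun u : ℝ => u ^ p * (1 - u) ^ q) (Ioo 0 1) := by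
    have h := Complex.betaIntegral_convergent (u := ((p + 1 : ℝ) : ℂ)) (v := ((q + 1 : ℝ) : ℂ))
      (by simp; linarith) (by simp; linarith)
    rw [intervalIntegrable_iff_integrableOn_Ioo_of_le zero_le_one] at h
    refine IntegrableOn.congr_fun h.norm ?_ measurableSet_Ioo
    intro x hx
    have hx1 : 0 < 1 - x := by linarith [hx.2]
    have e : (1 - (x : ℂ)) = ((1 - x : ℝ) : ℂ) := by push_cast; rfl
    simp only [norm_mul]
    rw [e, Complex.norm_cpow_eq_rpow_re_of_pos hx.1, Complex.norm_cpow_eq_rpow_re_of_pos hx1]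
    simp
  refine ⟨∫ u in Ioo (0:ℝ) 1, u ^ p * (1 - u) ^ q, ?_, ?_⟩
  · refine setIntegral_nonneg measurableSet_Ioo ?_
    intro x hx
    have hx1 : 0 < 1 - x := by linarith [hx.2]
    have := hx.1
    positivity
  intro x
  rcases le_or_gt x 0 with hx | hx
  · simp [Ioo_eq_empty (not_lt.mpr hx), not_lt.mpr hx]
  have e : ∀ s ∈ Ioo 0 x, x ^ (p + q) * ((s / x) ^ p * (1 - s / x) ^ q) = s ^ p * (x - s) ^ q := by
    intro s hs
    have h2 : 0 < x - s := by linarith [hs.2]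
    have h3 : 1 - s / x = (x - s) / x := by field_simp
    rw [h3, Real.div_rpow hs.1.le hx.le, Real.div_rpow h2.le hx.le, Real.rpow_add hx]
    have := Real.rpow_pos_of_pos hx p
    have := Real.rpow_pos_of_pos hx q
    field_simp
  constructor
  · rw [← intervalIntegrable_iff_integrableOn_Ioo_of_le zero_le_one] at h1
    have h2 := h1.comp_mul_right (c := x⁻¹)
    simp only [zero_div, one_div, inv_inv] at h2
    have h3 := h2.const_mul (x ^ (p + q))
    rw [intervalIntegrable_iff_integrableOn_Ioo_of_le hx.le] at h3
    exact h3.congr_fun (fun s hs => by simpa [div_eq_mul_inv] using e s hs) measurableSet_Ioo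
  · intro _
    rw [← setIntegral_congr_fun measurableSet_Ioo e, integral_const_mul,
      ← integral_Ioc_eq_integral_Ioo, ← integral_Ioc_eq_integral_Ioo,
      ← intervalIntegral.integral_of_le hx.le, ← intervalIntegral.integral_of_le zero_le_one,
      intervalIntegral.integral_comp_div (fun u : ℝ => u ^ p * (1 - u) ^ q) hx.ne']
    rw [Real.rpow_add_one hx.ne', div_self hx.ne', zero_div, smul_eq_mul]
    ring

structure Good (F : ℝ → ℝ) (p : ℝ) : Prop where
  meas : Measurable F
  zero : ∀ t ≤ 0, F t = 0
  bd : ∀ T : ℝ, ∃ C, 0 ≤ C ∧ ∀ t, 0 < t → t ≤ T → |F t| ≤ C * t ^ p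

noncomputable def cv (F G : ℝ → ℝ) : ℝ → ℝ :=
  convolution F G (ContinuousLinearMap.mul ℝ ℝ) volume

lemma cv_apply (F G : ℝ → ℝ) (x : ℝ) : cv F G x = ∫ t, F t * G (x - t) := rfl

lemma cv_comm (F G : ℝ → ℝ) : cv F G = cv G F := by
  ext x
  unfold cv
  rw [convolution_mul_swap, convolution_mul]
  simp_rw [mul_comm]

lemma Good.bound {F G : ℝ → ℝ} {p q : ℝ} (hF : Good F p) (hG : Good G q) (T : ℝ) :
    ∃ C, 0 ≤ C ∧ ∀ x ≤ T, ∀ s, ‖F s * G (x - s)‖ ≤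
      (Ioo 0 x).indicator (fun s => C * (s ^ p * (x - s) ^ q)) s := by
  obtain ⟨C, hC, h1⟩ := hF.bd T
  obtain ⟨D, hD, h2⟩ := hG.bd T
  refine ⟨C * D, by positivity, fun x hx s => ?_⟩
  by_cases hs : s ∈ Ioo 0 x
  · rw [indicator_of_mem hs, norm_mul]
    have a := h1 s hs.1 (by linarith [hs.2])
    have b := h2 (x - s) (by linarith [hs.2]) (by linarith [hs.1])
    calc _ ≤ (C * s ^ p) * (D * (x - s) ^ q) :=
          mul_le_mul a b (abs_nonneg _) ((abs_nonneg _).trans a)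
      _ = _ := by ring
  · rw [indicator_of_notMem hs]
    rcases le_or_gt s 0 with h | h
    · simp [hF.zero s h]
    · have : x - s ≤ 0 := by
        by_contra! h'
        exact hs ⟨h, by linarith⟩
      simp [hG.zero _ this]

lemma Good.exists {F G : ℝ → ℝ} {p q : ℝ} (hF : Good F p) (hG : Good G q)
    (hp : -1 < p) (hq : -1 < q) (x : ℝ) :
    ConvolutionExistsAt F G x (ContinuousLinearMap.mul ℝ ℝ) volume := by
  obtain ⟨C, hC, h⟩ := hF.bound hG x
  obtain ⟨B, hB, hb⟩ := beta_key hp hq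
  have := hF.meas
  have := hG.meas
  refine Integrable.mono' (g := (Ioo 0 x).indicator (fun s => C * (s ^ p * (x - s) ^ q))) ?_ ?_
    (Eventually.of_forall (h x le_rfl))
  · rw [integrable_indicator_iff measurableSet_Ioo]
    exact (hb x).1.const_mul C
  · have : Measurable (fun t => F t * G (x - t)) := by fun_prop
    exact this.aestronglyMeasurable

lemma Good.conv {F G : ℝ → ℝ} {p q : ℝ} (hF : Good F p) (hG : Good G q)
    (hp : -1 < p) (hq : -1 < q) : Good (cv F G) (p + q + 1) := by
  have m1 := hF.meas
  have m2 := hG.meas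
  refine ⟨?_, ?_, ?_⟩
  · have : StronglyMeasurable (Function.uncurry (fun x t : ℝ => F t * G (x - t))) := by
      apply Measurable.stronglyMeasurable
      unfold Function.uncurry
      fun_prop
    exact (this.integral_prod_right (ν := volume)).measurable
  · intro t ht
    obtain ⟨C, hC, h⟩ := hF.bound hG t
    rw [cv_apply]
    have : ∀ s, F s * G (t - s) = 0 := by
      intro s
      have := h t le_rfl s
      rw [Ioo_eq_empty (not_lt.mpr ht)] at this
      exact norm_le_zero_iff.1 (by simpa only [indicator_empty] using this)
    simp [this]
  · intro T
    obtain ⟨C, hC, h⟩ := hF.bound hG T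
    obtain ⟨B, hB, hb⟩ := beta_key hp hq
    refine ⟨C * B, by positivity, fun t ht htT => ?_⟩
    rw [cv_apply, ← Real.norm_eq_abs]
    refine (norm_integral_le_of_norm_le ?_ (Eventually.of_forall (h t htT))).trans ?_
    · rw [integrable_indicator_iff measurableSet_Ioo]
      exact (hb t).1.const_mul C
    · rw [integral_indicator measurableSet_Ioo, integral_const_mul, (hb t).2 ht, mul_assoc]

lemma Good.norm {F : ℝ → ℝ} {p : ℝ} (hF : Good F p) : Good (fun x => ‖F x‖) p :=
  ⟨hF.meas.norm, fun t ht => by simp [hF.zero t ht], by simpa using hF.bd⟩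

lemma cv_assoc {F G H : ℝ → ℝ} {p q r : ℝ} (hF : Good F p) (hG : Good G q) (hH : Good H r)
    (hp : -1 < p) (hq : -1 < q) (hr : -1 < r) : cv (cv F G) H = cv F (cv G H) := by
  ext x
  refine convolution_assoc _ _ _ _ (fun x y z => by simp [mul_assoc])
    hF.meas.aestronglyMeasurable hG.meas.aestronglyMeasurable hH.meas.aestronglyMeasurable
    (Eventually.of_forall fun y => hF.exists hG hp hq y)
    (Eventually.of_forall fun y => hG.norm.exists hH.norm hq hr y)
    (hF.norm.exists (hG.norm.conv hH.norm hq hr) hp (by linarith) x)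

/-- truncation to the positive axis -/
noncomputable def tr (f : ℝ → ℝ) : ℝ → ℝ := (Ioi (0:ℝ)).indicator f

lemma tr_pos (f : ℝ → ℝ) {t : ℝ} (h : 0 < t) : tr f t = f t := indicator_of_mem (mem_Ioi.2 h) f
lemma tr_neg (f : ℝ → ℝ) {t : ℝ} (h : t ≤ 0) : tr f t = 0 :=
  indicator_of_notMem (by simpa using h) f

lemma lconv_eq (f g : ℝ → ℝ) {t : ℝ} (ht : 0 < t) : lconv f g t = cv (tr f) (tr g) t := by
  rw [cv_comm, cv_apply, lconv, intervalIntegral.integral_of_le ht.le,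
    integral_Ioc_eq_integral_Ioo, ← integral_indicator measurableSet_Ioo]
  congr 1
  ext s
  by_cases hs : s ∈ Ioo 0 t
  · rw [indicator_of_mem hs, tr_pos _ hs.1, tr_pos _ (by linarith [hs.2]), mul_comm]
  · rw [indicator_of_notMem hs]
    rcases le_or_gt s 0 with h | h
    · simp [tr_neg _ h]
    · have : t - s ≤ 0 := by
        by_contra! h'
        exact hs ⟨h, by linarith⟩
      simp [tr_neg _ this]

lemma tr_lconv (f g : ℝ → ℝ) {p q : ℝ} (hF : Good (tr f) p) (hG : Good (tr g) q)
    (hp : -1 < p) (hq : -1 < q) : tr (lconv f g) = cv (tr f) (tr g) := by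
  ext t
  rcases le_or_gt t 0 with h | h
  · rw [tr_neg _ h, (hF.conv hG hp hq).zero t h]
  · rw [tr_pos _ h, lconv_eq _ _ h]

lemma tr_congr {f g : ℝ → ℝ} (h : ∀ t, 0 < t → f t = g t) : tr f = tr g := by
  ext t
  rcases le_or_gt t 0 with h' | h'
  · rw [tr_neg _ h', tr_neg _ h']
  · rw [tr_pos _ h', tr_pos _ h', h t h']

lemma Cm1.cont {f : ℝ → ℝ} (h : Cm1 f) : ContinuousOn f (Ioi 0) := by
  obtain ⟨p, hp, f₁, hc, h⟩ := h
  refine ContinuousOn.congr (f := fun t => t ^ p * f₁ t) ?_ (fun t ht => h t ht)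
  refine ContinuousOn.mul ?_ (hc.mono Ioi_subset_Ici_self)
  intro t ht
  exact (Real.continuousAt_rpow_const _ _ (Or.inl (ne_of_gt ht))).continuousWithinAt

lemma Cm1.good {f : ℝ → ℝ} (h : Cm1 f) : ∃ p, -1 < p ∧ Good (tr f) p := by
  have hcont := h.cont
  obtain ⟨p, hp, f₁, hc, h⟩ := h
  refine ⟨p, hp, ?_, fun t => tr_neg f, ?_⟩
  · classical
    have := hcont.measurable_piecewise (g := fun _ => 0) continuousOn_const measurableSet_Ioi
    rw [tr]
    convert this using 1
    ext t
    simp [indicator, piecewise]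
  · intro T
    obtain ⟨C, hC⟩ := (isCompact_Icc (a := (0:ℝ)) (b := T)).exists_bound_of_continuousOn
      (hc.mono Icc_subset_Ici_self)
    refine ⟨max C 0, le_max_right _ _, fun t ht htT => ?_⟩
    rw [tr_pos _ ht, h t ht, abs_mul, abs_of_nonneg (Real.rpow_nonneg ht.le p), mul_comm]
    gcongr
    exact (hC t ⟨ht.le, htT⟩).trans (le_max_left _ _)

lemma Cm10.cm1 {f : ℝ → ℝ} (h : Cm10 f) : Cm1 f := by
  obtain ⟨p, hp, _, h⟩ := h
  exact ⟨p, hp, h⟩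

noncomputable def hh (m : ℕ) : ℝ → ℝ := fun t => t ^ m / m.factorial

lemma good_hh (m : ℕ) : ∃ p, -1 < p ∧ Good (tr (hh m)) p := by
  apply Cm1.good
  refine ⟨0, by norm_num, hh m, ?_, by simp⟩
  unfold hh
  fun_prop

lemma cv_one (G : ℝ → ℝ) {t : ℝ} (ht : 0 < t) : cv (tr (hh 0)) (tr G) t = ∫ s in (0:ℝ)..t, G s := by
  rw [← lconv_eq _ _ ht, lconv]
  simp [hh]

lemma hh_succ (m : ℕ) : tr (hh (m + 1)) = cv (tr (hh 0)) (tr (hh m)) := by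
  obtain ⟨p, hp, h0⟩ := good_hh 0
  obtain ⟨q, hq, h1⟩ := good_hh m
  ext t
  rcases le_or_gt t 0 with h | h
  · rw [tr_neg _ h, (h0.conv h1 hp hq).zero t h]
  · rw [tr_pos _ h, cv_one _ h]
    simp only [hh]
    rw [intervalIntegral.integral_div, integral_pow, Nat.factorial_succ]
    push_cast
    have : (m.factorial : ℝ) ≠ 0 := by positivity
    have : (m + 1 : ℝ) ≠ 0 := by positivity
    field_simp
    simp

noncomputable def PP (F : ℝ → ℝ) : ℕ → ℝ → ℝ
  | 0 => F
  | m + 1 => cv (tr (hh 0)) (PP F m)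

lemma PP_good {F : ℝ → ℝ} {p : ℝ} (hp : -1 < p) (hF : Good F p) (m : ℕ) :
    ∃ q, -1 < q ∧ Good (PP F m) q := by
  induction m with
  | zero => exact ⟨p, hp, hF⟩
  | succ m ih =>
    obtain ⟨q, hq, h⟩ := ih
    obtain ⟨r, hr, h0⟩ := good_hh 0
    exact ⟨_, by linarith, h0.conv h hr hq⟩

lemma PP_eq {F : ℝ → ℝ} {p : ℝ} (hp : -1 < p) (hF : Good F p) (m : ℕ) :
    PP F (m + 1) = cv (tr (hh m)) F := by
  induction m with
  | zero => rfl
  | succ m ih =>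
    obtain ⟨r, hr, h0⟩ := good_hh 0
    obtain ⟨q, hq, h1⟩ := good_hh m
    rw [PP, ih, hh_succ, cv_assoc h0 h1 hF hr hq hp]

lemma tr_good {G : ℝ → ℝ} {q : ℝ} (h : Good G q) : tr G = G := by
  ext t
  rcases le_or_gt t 0 with h' | h'
  · rw [tr_neg _ h', h.zero t h']
  · rw [tr_pos _ h']

lemma prim {G : ℝ → ℝ} {q : ℝ} (hq : -1 < q) (h : Good G q) (hc : ContinuousOn G (Ioi 0))
    {t : ℝ} (ht : 0 < t) : HasDerivAt (cv (tr (hh 0)) G) (G t) t := by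
  have e : (fun t => ∫ s in (0:ℝ)..t, G s) =ᶠ[𝓝 t] cv (tr (hh 0)) G := by
    filter_upwards [Ioi_mem_nhds ht] with s hs
    rw [← cv_one G hs, tr_good h]
  refine HasDerivAt.congr_of_eventuallyEq ?_ e.symm
  apply intervalIntegral.integral_hasDerivAt_right
  · rw [intervalIntegrable_iff_integrableOn_Ioc_of_le ht.le]
    obtain ⟨C, hC, hb⟩ := h.bd t
    have hi := (intervalIntegral.intervalIntegrable_rpow' (a := 0) (b := t) hq).const_mul C
    rw [intervalIntegrable_iff_integrableOn_Ioc_of_le ht.le] at hi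
    refine Integrable.mono' hi h.meas.aestronglyMeasurable ?_
    exact (ae_restrict_iff' measurableSet_Ioc).2 (Eventually.of_forall fun s hs => hb s hs.1 hs.2)
  · exact h.meas.stronglyMeasurable.stronglyMeasurableAtFilter
  · exact hc.continuousAt (Ioi_mem_nhds ht)

lemma PP_cont {F : ℝ → ℝ} {p : ℝ} (hp : -1 < p) (hF : Good F p) (hc : ContinuousOn F (Ioi 0))
    (m : ℕ) : ContinuousOn (PP F m) (Ioi 0) := by
  induction m with
  | zero => exact hc
  | succ m ih =>
    obtain ⟨q, hq, h⟩ := PP_good hp hF m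
    intro t ht
    exact (prim hq h ih ht).continuousAt.continuousWithinAt

lemma PP_deriv {F : ℝ → ℝ} {p : ℝ} (hp : -1 < p) (hF : Good F p) (hc : ContinuousOn F (Ioi 0))
    (m : ℕ) : ∀ g : ℝ → ℝ, (∀ t, 0 < t → g t = PP F m t) →
      ∀ t, 0 < t → iteratedDeriv m g t = F t := by
  induction m with
  | zero =>
    intro g hg t ht
    simpa [PP] using hg t ht
  | succ m ih =>
    intro g hg
    rw [iteratedDeriv_succ']
    refine ih _ fun t ht => ?_
    obtain ⟨q, hq, h⟩ := PP_good hp hF m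
    refine HasDerivAt.deriv ?_
    refine (prim hq h (PP_cont hp hF hc m) ht).congr_of_eventuallyEq ?_
    filter_upwards [Ioi_mem_nhds ht] with s hs
    exact hg s hs

/-- Second Fundamental Theorem for the GFD of arbitrary order,
Riemann-Liouville case: for a pair `(κ, k) ∈ L_n` and `f = κ * φ` with
`φ ∈ C_{-1}(0,∞)`, `(I_{(κ)} D_{(k)} f)(t) = f(t)` for all `t > 0`. -/
theorem statement15 (n : ℕ) (hn : 1 ≤ n) (κ k : ℝ → ℝ)
    (hκ : Cm1 κ) (hk : Cm10 k)
    (hL : ∀ t : ℝ, 0 < t → lconv κ k t = t ^ (n - 1) / (n - 1).factorial)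
    (φ f : ℝ → ℝ) (hφ : Cm1 φ)
    (hf : ∀ t : ℝ, 0 < t → f t = lconv κ φ t) :
    ∀ t : ℝ, 0 < t →
      lconv κ (fun s => iteratedDeriv n (lconv k f) s) t = f t := by
  obtain ⟨p, hp, gκ⟩ := hκ.good
  obtain ⟨q, hq, gk⟩ := hk.cm1.good
  obtain ⟨r, hr, gφ⟩ := hφ.good
  have e1 : tr f = cv (tr κ) (tr φ) := by
    rw [tr_congr hf, tr_lconv κ φ gκ gφ hp hr]
  have e2 : cv (tr κ) (tr k) = tr (hh (n - 1)) := by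
    rw [← tr_lconv κ k gκ gk hp hq, tr_congr (g := hh (n - 1)) hL]
  have e3 : ∀ s, 0 < s → lconv k f s = PP (tr φ) n s := by
    intro s hs
    obtain ⟨m, rfl⟩ : ∃ m, n = m + 1 := ⟨n - 1, by omega⟩
    rw [lconv_eq _ _ hs, e1, ← cv_assoc gk gκ gφ hq hp hr, cv_comm (tr k), e2, PP_eq hr gφ]
    simp
  have hc : ContinuousOn (tr φ) (Ioi 0) := hφ.cont.congr fun t ht => tr_pos φ ht
  have e4 : ∀ s, 0 < s → iteratedDeriv n (lconv k f) s = φ s := by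
    intro s hs
    rw [PP_deriv hr gφ hc n _ e3 s hs, tr_pos _ hs]
  intro t ht
  rw [lconv_eq _ _ ht, tr_congr e4, ← lconv_eq _ _ ht, hf t ht]
end

section
/- Let n ∈ ℕ, n ≥ 2, and let ν ∈ ℝ with n − 2 < ν < n − 1. Define κ(t) = ∑_{m=0}^∞ (−1)^m t^{m+ν} / (m! Γ(m+ν+1)) (equal to t^{ν/2} J_ν(2√t), where J_ν is the Bessel function) and k(t) = ∑_{m=0}^∞ t^{m+n−ν−2} / (m! Γ(m+n−ν−1)) (equal to t^{(n−ν)/2−1} I_{n−ν−2}(2√t), where I_μ is the modified Bessel function). Then (κ * k)(t) = t^{n−1}/(n−1)! for all t > 0; moreover κ ∈ C_{−1}(0,∞) and k ∈ C_{−1,0}(0,∞), so the pair (κ, k) belongs to L_n. -/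
open Real MeasureTheory Set Filter Topology

lemma aux_beta (x y t : ℝ) (hx : 0 < x) (hy : 0 < y) (ht : 0 < t) :
    ∫ τ in Ioo 0 t, (t - τ) ^ (x - 1) * τ ^ (y - 1) =
      t ^ (x + y - 1) * (Real.Gamma x * Real.Gamma y / Real.Gamma (x + y)) := by
  have h := Complex.betaIntegral_scaled (y : ℂ) (x : ℂ) ht
  rw [Complex.betaIntegral_eq_Gamma_mul_div _ _ (by simpa) (by simpa)] at h
  rw [← integral_Ioc_eq_integral_Ioo, ← intervalIntegral.integral_of_le ht.le]
  have h2 : ∫ τ in (0:ℝ)..t, (τ : ℂ) ^ ((y : ℂ) - 1) * ((t : ℂ) - τ) ^ ((x : ℂ) - 1) =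
      ∫ τ in (0:ℝ)..t, (((t - τ) ^ (x - 1) * τ ^ (y - 1) : ℝ) : ℂ) := by
    apply intervalIntegral.integral_congr
    intro τ hτ
    rw [uIcc_of_le ht.le] at hτ
    simp only
    push_cast
    rw [Complex.ofReal_cpow (sub_nonneg.2 hτ.2), Complex.ofReal_cpow hτ.1]
    push_cast
    ring
  rw [h2, intervalIntegral.integral_ofReal] at h
  apply Complex.ofReal_injective
  rw [h]
  push_cast
  rw [Complex.ofReal_cpow ht.le, ← Complex.Gamma_ofReal, ← Complex.Gamma_ofReal,
    ← Complex.Gamma_ofReal]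
  push_cast
  rw [add_comm (y : ℂ) x, mul_comm (Complex.Gamma y)]

lemma aux_beta_int (x y t : ℝ) (hx : 0 < x) (hy : 0 < y) (ht : 0 < t) :
    IntegrableOn (fun τ => (t - τ) ^ (x - 1) * τ ^ (y - 1)) (Ioo 0 t) := by
  by_contra h
  have h1 := integral_undef h
  rw [aux_beta x y t hx hy ht] at h1
  have := Real.Gamma_pos_of_pos hx
  have := Real.Gamma_pos_of_pos hy
  have := Real.Gamma_pos_of_pos (add_pos hx hy)
  have : 0 < t ^ (x + y - 1) * (Real.Gamma x * Real.Gamma y / Real.Gamma (x + y)) := by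
    positivity
  linarith

lemma aux_gamma (a : ℝ) (ha : 0 < a) : ∃ c : ℝ, 0 < c ∧ ∀ m : ℕ, c ≤ Real.Gamma (m + a) := by
  refine ⟨min (Real.Gamma a) (Real.Gamma (a + 1)), lt_min (Real.Gamma_pos_of_pos ha)
    (Real.Gamma_pos_of_pos (by linarith)), ?_⟩
  have h1 : ∀ m : ℕ, Real.Gamma (a + 1) ≤ Real.Gamma (((m + 1 : ℕ) : ℝ) + a) := by
    intro m
    induction m with
    | zero => simp [add_comm]
    | succ m ih =>
      have e : (((m + 1 + 1 : ℕ) : ℝ) + a) = (((m + 1 : ℕ) : ℝ) + a) + 1 := by push_cast; ring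
      have hp : 0 < (((m + 1 : ℕ) : ℝ) + a) := by positivity
      rw [e, Real.Gamma_add_one hp.ne']
      have := Real.Gamma_pos_of_pos hp
      have h1 : 1 ≤ (((m + 1 : ℕ) : ℝ) + a) := by
        push_cast
        have : (0:ℝ) ≤ m := Nat.cast_nonneg m
        linarith
      nlinarith
  intro m
  cases m with
  | zero => simp
  | succ m => exact (min_le_right _ _).trans (h1 m)

lemma aux_bound (a : ℝ) (ha : 0 < a) : ∃ C : ℝ, 0 < C ∧ ∀ (m : ℕ) (t R : ℝ), |t| ≤ R →
    ‖t ^ m / (m.factorial * Real.Gamma (m + a))‖ ≤ C * (R ^ m / m.factorial) := by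
  obtain ⟨c, hc, h⟩ := aux_gamma a ha
  refine ⟨1 / c, by positivity, fun m t R hR => ?_⟩
  have hg := h m
  have hg' : 0 < Real.Gamma (m + a) := hc.trans_le hg
  have hf : (0:ℝ) < m.factorial := by positivity
  rw [norm_div, norm_pow, Real.norm_eq_abs, Real.norm_eq_abs, abs_of_pos (mul_pos hf hg')]
  have hR0 : 0 ≤ R := (abs_nonneg t).trans hR
  calc |t| ^ m / (m.factorial * Real.Gamma (m + a)) ≤ R ^ m / (m.factorial * c) := by gcongr
    _ = _ := by field_simp

lemma aux_summable (a : ℝ) (ha : 0 < a) (t : ℝ) :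
    Summable fun m : ℕ => ‖t ^ m / (m.factorial * Real.Gamma (m + a))‖ := by
  obtain ⟨C, hC, h⟩ := aux_bound a ha
  exact Summable.of_nonneg_of_le (fun _ => norm_nonneg _) (fun m => h m t |t| le_rfl)
    ((Real.summable_pow_div_factorial |t|).mul_left C)

lemma aux_cont (a : ℝ) (ha : 0 < a) :
    Continuous fun t : ℝ => ∑' m : ℕ, t ^ m / (m.factorial * Real.Gamma (m + a)) := by
  obtain ⟨C, hC, h⟩ := aux_bound a ha
  rw [continuous_iff_continuousAt]
  intro t
  have : ContinuousOn (fun t : ℝ => ∑' m : ℕ, t ^ m / (m.factorial * Real.Gamma (m + a)))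
      (Metric.ball 0 (|t| + 1)) := by
    refine continuousOn_tsum (fun i => by fun_prop)
      ((Real.summable_pow_div_factorial (|t| + 1)).mul_left C) (fun m x hx => h m x _ ?_)
    simpa using (mem_ball_zero_iff.1 hx).le
  exact this.continuousAt (Metric.isOpen_ball.mem_nhds (by simp))

lemma aux_antidiag (h : ℕ → ℝ)
    (hs : Summable fun p : ℕ × ℕ => (-1) ^ p.1 / (p.1.factorial * p.2.factorial) * h (p.1 + p.2)) :
    ∑' p : ℕ × ℕ, (-1 : ℝ) ^ p.1 / (p.1.factorial * p.2.factorial) * h (p.1 + p.2) = h 0 := by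
  rw [← Finset.HasAntidiagonal.sigmaAntidiagonalEquivProd.tsum_eq]
  have hs' := (Finset.HasAntidiagonal.sigmaAntidiagonalEquivProd (A := ℕ)).summable_iff.2 hs
  simp only [Function.comp_def] at hs'
  rw [Summable.tsum_sigma' (fun n => (hasSum_fintype _).summable) hs']
  rw [tsum_eq_single 0]
  · rw [tsum_fintype]
    simp only [Finset.HasAntidiagonal.sigmaAntidiagonalEquivProd, Equiv.coe_fn_mk]
    rw [Finset.sum_coe_sort (Finset.HasAntidiagonal.antidiagonal 0)
      (fun p : ℕ × ℕ => (-1 : ℝ) ^ p.1 / (p.1.factorial * p.2.factorial) * h (p.1 + p.2))]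
    simp
  · intro N hN
    rw [tsum_fintype]
    simp only [Finset.HasAntidiagonal.sigmaAntidiagonalEquivProd, Equiv.coe_fn_mk]
    rw [Finset.sum_coe_sort (Finset.HasAntidiagonal.antidiagonal N)
      (fun p : ℕ × ℕ => (-1 : ℝ) ^ p.1 / (p.1.factorial * p.2.factorial) * h (p.1 + p.2))]
    have h1 : ∀ p ∈ Finset.HasAntidiagonal.antidiagonal N,
        (-1 : ℝ) ^ p.1 / (p.1.factorial * p.2.factorial) * h (p.1 + p.2)
        = (h N / N.factorial) * (N.choose p.1 • ((-1 : ℝ) ^ p.1 * 1 ^ p.2)) := by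
      intro p hp
      rw [Finset.HasAntidiagonal.mem_antidiagonal] at hp
      subst hp
      have := Nat.add_choose_mul_factorial_mul_factorial p.1 p.2
      rw [← Nat.choose_symm_add] at this
      have h2 : (((p.1 + p.2).choose p.1 : ℝ)) * p.1.factorial * p.2.factorial =
        (p.1 + p.2).factorial := by
          exact_mod_cast this
      have h3 : (((p.1 + p.2).factorial : ℕ) : ℝ) ≠ 0 := by positivity
      rw [nsmul_eq_mul, one_pow, mul_one]
      field_simp
      rw [← h2]
      ring
    rw [Finset.sum_congr rfl h1, ← Finset.mul_sum, ← (Commute.all (-1 : ℝ) 1).add_pow']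
    simp [hN]

/-- For `n ≥ 2` and `n - 2 < ν < n - 1`, the kernels
`κ(t) = ∑_{m} (-1)^m t^{m+ν}/(m! Γ(m+ν+1)) = t^{ν/2} J_ν(2√t)` and
`k(t) = ∑_{m} t^{m+n-ν-2}/(m! Γ(m+n-ν-1)) = t^{(n-ν)/2-1} I_{n-ν-2}(2√t)`
satisfy `(κ * k)(t) = t^{n-1}/(n-1)!` for `t > 0`, `κ ∈ C_{-1}(0,∞)` and
`k ∈ C_{-1,0}(0,∞)`; i.e. the pair `(κ, k)` belongs to `L_n`. -/
theorem statement17 (n : ℕ) (hn : 2 ≤ n) (ν : ℝ)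
    (hν1 : (n : ℝ) - 2 < ν) (hν2 : ν < (n : ℝ) - 1)
    (κ k : ℝ → ℝ)
    (hκ : ∀ t : ℝ, 0 < t →
      κ t = ∑' m : ℕ, (-1) ^ m * t ^ ((m : ℝ) + ν) /
        (m.factorial * Real.Gamma ((m : ℝ) + ν + 1)))
    (hk : ∀ t : ℝ, 0 < t →
      k t = ∑' m : ℕ, t ^ ((m : ℝ) + (n : ℝ) - ν - 2) /
        (m.factorial * Real.Gamma ((m : ℝ) + (n : ℝ) - ν - 1))) :
    (∀ t : ℝ, 0 < t → lconv κ k t = t ^ (n - 1) / (n - 1).factorial) ∧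
      Cm1 κ ∧ Cm10 k := by

  set a : ℝ := ν + 1 with ha_def
  set b : ℝ := (n : ℝ) - ν - 1 with hb_def
  have hn' : (2 : ℝ) ≤ n := by exact_mod_cast hn
  have ha : 0 < a := by linarith
  have hb : 0 < b := by linarith
  have hab : a + b = n := by simp only [ha_def, hb_def]; ring
  have tκ : ∀ (m : ℕ) (t : ℝ), 0 < t → (-1) ^ m * t ^ ((m : ℝ) + ν) /
        (m.factorial * Real.Gamma ((m : ℝ) + ν + 1)) =
        t ^ ν * ((-t) ^ m / (m.factorial * Real.Gamma (m + a))) := by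
    intro m t ht
    rw [Real.rpow_add ht, Real.rpow_natCast, neg_pow t, ha_def, add_assoc]
    ring
  have tk : ∀ (m : ℕ) (t : ℝ), 0 < t → t ^ ((m : ℝ) + (n : ℝ) - ν - 2) /
        (m.factorial * Real.Gamma ((m : ℝ) + (n : ℝ) - ν - 1)) =
        t ^ (b - 1) * (t ^ m / (m.factorial * Real.Gamma (m + b))) := by
    intro m t ht
    rw [show (m : ℝ) + (n : ℝ) - ν - 2 = m + (b - 1) by rw [hb_def]; ring,
      show (m : ℝ) + (n : ℝ) - ν - 1 = m + b by rw [hb_def]; ring,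
      Real.rpow_add ht, Real.rpow_natCast]
    ring
  refine ⟨?_, ⟨ν, by linarith, fun t => ∑' m : ℕ, (-t) ^ m / (m.factorial * Real.Gamma (m + a)),
    ((aux_cont a ha).comp continuous_neg).continuousOn, ?_⟩,
    ⟨b - 1, by linarith, by linarith,
      fun t => ∑' m : ℕ, t ^ m / (m.factorial * Real.Gamma (m + b)),
      (aux_cont b hb).continuousOn, ?_⟩⟩
  rotate_left
  · intro t ht
    rw [hκ t ht, tsum_congr (fun m => tκ m t ht), tsum_mul_left]
  · intro t ht
    rw [hk t ht, tsum_congr (fun m => tk m t ht), tsum_mul_left]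
  intro t ht
  unfold lconv
  rw [intervalIntegral.integral_of_le ht.le, integral_Ioc_eq_integral_Ioo]
  let c : ℕ × ℕ → ℝ := fun p => (-1) ^ p.1 / (p.1.factorial * p.2.factorial *
    (Real.Gamma (p.1 + a) * Real.Gamma (p.2 + b)))
  let B : ℕ × ℕ → ℝ → ℝ := fun p τ => (t - τ) ^ ((p.1 : ℝ) + a - 1) * τ ^ ((p.2 : ℝ) + b - 1)
  have hga : ∀ m : ℕ, 0 < Real.Gamma (m + a) := fun m => Real.Gamma_pos_of_pos (by positivity)
  have hgb : ∀ m : ℕ, 0 < Real.Gamma (m + b) := fun m => Real.Gamma_pos_of_pos (by positivity)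
  have e1 : ∀ τ ∈ Ioo 0 t, κ (t - τ) * k τ = ∑' p : ℕ × ℕ, c p * B p τ := by
    intro τ hτ
    have h1 : 0 < t - τ := sub_pos.2 hτ.2
    rw [hκ _ h1, hk _ hτ.1, tsum_mul_tsum_of_summable_norm]
    · refine tsum_congr fun p => ?_
      simp only [c, B]
      rw [show (p.1 : ℝ) + ν + 1 = p.1 + a by rw [ha_def]; ring,
        show (p.1 : ℝ) + ν = p.1 + a - 1 by rw [ha_def]; ring,
        show (p.2 : ℝ) + (n : ℝ) - ν - 2 = p.2 + b - 1 by rw [hb_def]; ring,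
        show (p.2 : ℝ) + (n : ℝ) - ν - 1 = p.2 + b by rw [hb_def]; ring]
      have := (hga p.1).ne'
      have := (hgb p.2).ne'
      field_simp
    · simp_rw [tκ _ _ h1, norm_mul]
      exact (aux_summable a ha _).mul_left _
    · simp_rw [tk _ _ hτ.1, norm_mul]
      exact (aux_summable b hb _).mul_left _
  rw [setIntegral_congr_fun measurableSet_Ioo e1]
  let h : ℕ → ℝ := fun N => t ^ (N + n - 1) / (N + n - 1).factorial
  have hBint : ∀ p, ∫ τ in Ioo 0 t, B p τ =
      Real.Gamma (p.1 + a) * Real.Gamma (p.2 + b) * h (p.1 + p.2) := by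
    intro p
    simp only [B, h]
    rw [aux_beta _ _ t (by positivity) (by positivity) ht]
    have e : (p.1 : ℝ) + a + (p.2 + b) = ((p.1 + p.2 + n - 1 : ℕ) : ℝ) + 1 := by
      have : p.1 + p.2 + n - 1 + 1 = p.1 + p.2 + n := by omega
      have h2 : ((p.1 + p.2 + n - 1 : ℕ) : ℝ) + 1 = p.1 + p.2 + n := by exact_mod_cast this
      rw [h2, ← hab]; ring
    rw [e, Real.Gamma_nat_eq_factorial, add_sub_cancel_right, Real.rpow_natCast]
    ring
  have hcB : ∀ p, c p * (Real.Gamma (p.1 + a) * Real.Gamma (p.2 + b) * h (p.1 + p.2)) =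
      (-1) ^ p.1 / (p.1.factorial * p.2.factorial) * h (p.1 + p.2) := by
    intro p
    simp only [c]
    have := (hga p.1).ne'
    have := (hgb p.2).ne'
    field_simp
  have hh : ∀ N, 0 ≤ h N := fun N => by simp only [h]; positivity
  have hnorm : ∀ p, ∫ τ in Ioo 0 t, ‖c p * B p τ‖ =
      1 / (p.1.factorial * p.2.factorial) * h (p.1 + p.2) := by
    intro p
    have : ∀ τ ∈ Ioo 0 t, ‖c p * B p τ‖ = |c p| * B p τ := by
      intro τ hτ
      have h1 : 0 < t - τ := sub_pos.2 hτ.2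
      have h2 : 0 < τ := hτ.1
      rw [norm_mul, Real.norm_eq_abs, Real.norm_eq_abs, abs_of_nonneg (a := B p τ)]
      simp only [B]; positivity
    rw [setIntegral_congr_fun measurableSet_Ioo this, integral_const_mul, hBint]
    have h3 := hcB p
    have h4 : 0 ≤ Real.Gamma (p.1 + a) * Real.Gamma (p.2 + b) * h (p.1 + p.2) :=
      mul_nonneg (mul_nonneg (hga _).le (hgb _).le) (hh _)
    rw [← abs_of_nonneg h4, ← abs_mul, h3, abs_mul, abs_div, abs_pow, abs_neg, abs_one, one_pow,
      abs_of_nonneg (hh _), abs_of_nonneg (by positivity)]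
  have hsum : Summable fun p : ℕ × ℕ =>
      1 / ((p.1.factorial : ℝ) * p.2.factorial) * h (p.1 + p.2) := by
    have hs := Real.summable_pow_div_factorial t
    have hs2 := (hs.mul_of_nonneg hs (fun _ => by simp only [Pi.zero_apply]; positivity)
      (fun _ => by simp only [Pi.zero_apply]; positivity)).mul_left (t ^ (n - 1))
    refine Summable.of_nonneg_of_le (fun p => mul_nonneg (by positivity) (hh _)) (fun p => ?_) hs2
    have hb1 : h (p.1 + p.2) ≤ t ^ (p.1 + p.2 + n - 1) := by
      simp only [h]
      exact div_le_self (by positivity) (by exact_mod_cast Nat.factorial_pos _)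
    calc 1 / ((p.1.factorial : ℝ) * p.2.factorial) * h (p.1 + p.2)
        ≤ 1 / ((p.1.factorial : ℝ) * p.2.factorial) * t ^ (p.1 + p.2 + n - 1) := by gcongr
      _ = _ := by
        rw [show p.1 + p.2 + n - 1 = p.1 + p.2 + (n - 1) by omega, pow_add, pow_add]
        field_simp
  have key := hasSum_integral_of_summable_integral_norm (μ := volume.restrict (Ioo 0 t))
    (F := fun p τ => c p * B p τ)
    (fun p => (aux_beta_int _ _ t (by positivity) (by positivity) ht).const_mul (c p))
    (by simp_rw [hnorm]; exact hsum)
  simp_rw [integral_const_mul, hBint, hcB] at key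
  rw [← key.tsum_eq, aux_antidiag h key.summable]
  simp [h]
end

section
/- Let m ∈ ℕ₀, let f ∈ C^m_{−1}(0,∞) with f(0) = f′(0) = ⋯ = f^{(m−1)}(0) = 0 (limits as t → 0+), and let g ∈ C¹_{−1}(0,∞). Then the Laplace convolution h = f * g belongs to C^{m+1}_{−1}(0,∞) and satisfies h(0) = h′(0) = ⋯ = h^{(m)}(0) = 0. -/
open Real MeasureTheory Set Filter Topology

lemma Cm1.norm_form {f : ℝ → ℝ} (h : Cm1 f) : ∃ p : ℝ, -1 < p ∧ ∃ φ : ℝ → ℝ, Continuous φ ∧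
    ∀ t : ℝ, 0 < t → f t = t ^ p * φ t := by
  obtain ⟨p, hp, f₁, hc, hf⟩ := h
  refine ⟨p, hp, fun t => f₁ (max t 0), ?_, ?_⟩
  · exact hc.comp_continuous (by fun_prop) (fun x => mem_Ici.2 (le_max_right _ _))
  · intro t ht
    simp only [max_eq_left ht.le, hf t ht]

lemma Cm1.congr {f g : ℝ → ℝ} (h : Cm1 f) (hfg : ∀ t, 0 < t → g t = f t) : Cm1 g := by
  obtain ⟨p, hp, f₁, hc, hf⟩ := h
  exact ⟨p, hp, f₁, hc, fun t ht => (hfg t ht).trans (hf t ht)⟩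

lemma Cm1.of_const (c : ℝ) : Cm1 (fun _ => c) :=
  ⟨0, by norm_num, fun _ => c, continuousOn_const, by simp⟩

lemma Cm1.add {f g : ℝ → ℝ} (hf : Cm1 f) (hg : Cm1 g) : Cm1 (fun t => f t + g t) := by
  obtain ⟨p, hp, f₁, hfc, hf⟩ := hf
  obtain ⟨q, hq, g₁, hgc, hg⟩ := hg
  refine ⟨min p q, lt_min hp hq, fun t => t ^ (p - min p q) * f₁ t + t ^ (q - min p q) * g₁ t, ?_, ?_⟩
  · have h1 : Continuous fun t : ℝ => t ^ (p - min p q) :=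
      Real.continuous_rpow_const (sub_nonneg.2 (min_le_left _ _))
    have h2 : Continuous fun t : ℝ => t ^ (q - min p q) :=
      Real.continuous_rpow_const (sub_nonneg.2 (min_le_right _ _))
    exact (h1.continuousOn.mul hfc).add (h2.continuousOn.mul hgc)
  · intro t ht
    simp only
    rw [hf t ht, hg t ht, mul_add, ← mul_assoc, ← mul_assoc, ← Real.rpow_add ht, ← Real.rpow_add ht]
    congr 3 <;> ring_nf

lemma Cm1.const_mul {f : ℝ → ℝ} (hf : Cm1 f) (c : ℝ) : Cm1 (fun t => c * f t) := by
  obtain ⟨p, hp, f₁, hfc, hf⟩ := hf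
  exact ⟨p, hp, fun t => c * f₁ t, continuousOn_const.mul hfc,
    fun t ht => by simp only [hf t ht]; ring⟩

lemma Cm1.continuousAt {f : ℝ → ℝ} (hf : Cm1 f) {t : ℝ} (ht : 0 < t) : ContinuousAt f t := by
  obtain ⟨p, hp, φ, hc, hf⟩ := hf.norm_form
  have : ContinuousAt (fun t => t ^ p * φ t) t :=
    (Real.continuousAt_rpow_const _ _ (Or.inl ht.ne')).mul hc.continuousAt
  exact this.congr ((eventually_gt_nhds ht).mono fun s hs => (hf s hs).symm)

lemma Cm1.intervalIntegrable {f : ℝ → ℝ} (hf : Cm1 f) {a b : ℝ} (ha : 0 ≤ a) (hb : 0 ≤ b) :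
    IntervalIntegrable f volume a b := by
  obtain ⟨p, hp, φ, hc, hf⟩ := hf.norm_form
  have h : IntervalIntegrable (fun t => t ^ p * φ t) volume a b :=
    (intervalIntegral.intervalIntegrable_rpow' hp).mul_continuousOn hc.continuousOn
  refine h.congr_uIoo fun s hs => (hf s ?_).symm
  exact (le_min ha hb).trans_lt hs.1

lemma kernel_int {p q : ℝ} (hp : -1 < p) (hq : -1 < q) {t : ℝ} (ht : 0 < t) :
    IntervalIntegrable (fun s : ℝ => (t - s) ^ p * s ^ q) volume 0 t := by
  have A : ∀ p q : ℝ, -1 < p → -1 < q →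
      IntervalIntegrable (fun s : ℝ => (t - s) ^ p * s ^ q) volume 0 (t/2) := by
    intro p q hp hq
    refine (intervalIntegral.intervalIntegrable_rpow' hq).continuousOn_mul ?_
    refine ContinuousOn.rpow_const (by fun_prop) fun x hx => Or.inl ?_
    rw [uIcc_of_le (by linarith)] at hx
    have := hx.2
    linarith
  refine (A p q hp hq).trans ?_
  have := (A q p hq hp).comp_sub_left t
  rw [sub_zero, show t - t/2 = t/2 by ring] at this
  refine this.symm.congr fun s _ => ?_
  simp [mul_comm]

lemma conv_int {u v : ℝ → ℝ} (hu : Cm1 u) (hv : Cm1 v) {t : ℝ} (ht : 0 < t) :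
    IntervalIntegrable (fun s : ℝ => u (t - s) * v s) volume 0 t := by
  obtain ⟨p, hp, φ, hφ, hu⟩ := hu.norm_form
  obtain ⟨q, hq, ψ, hψ, hv⟩ := hv.norm_form
  have h := (kernel_int hp hq ht).mul_continuousOn
    (g := fun s => φ (t - s) * ψ s) (by fun_prop)
  refine h.congr_uIoo fun s hs => ?_
  rw [uIoo_of_le ht.le] at hs
  simp only
  rw [hu _ (sub_pos.2 hs.2), hv _ hs.1]; ring

lemma lconv_Cm1 {u v : ℝ → ℝ} (hu : Cm1 u) (hv : Cm1 v) : Cm1 (lconv u v) := by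
  obtain ⟨p, hp, φ, hφ, hu⟩ := hu.norm_form
  obtain ⟨q, hq, ψ, hψ, hv⟩ := hv.norm_form
  refine ⟨p + q + 1, by linarith, fun t => ∫ s in (0:ℝ)..1,
    ((1 - s) ^ p * s ^ q) * (φ (t * (1 - s)) * ψ (t * s)), ?_, ?_⟩
  · refine Continuous.continuousOn (continuous_iff_continuousAt.2 fun t₀ => ?_)
    have hk := kernel_int hp hq one_pos
    have hc : Continuous fun z : ℝ × ℝ => φ (z.1 * (1 - z.2)) * ψ (z.1 * z.2) := by fun_prop
    obtain ⟨M, hM⟩ := ((isCompact_Icc (a := t₀ - 1) (b := t₀ + 1)).prod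
      (isCompact_Icc (a := (0:ℝ)) (b := 1))).exists_bound_of_continuousOn hc.continuousOn
    refine intervalIntegral.continuousAt_of_dominated_interval
      (bound := fun s => ‖(1 - s) ^ p * s ^ q‖ * M) ?_ ?_ ?_ ?_
    · refine Eventually.of_forall fun t => ?_
      exact (hk.mul_continuousOn (g := fun s => φ (t * (1 - s)) * ψ (t * s))
        (by fun_prop)).def'.aestronglyMeasurable
    · filter_upwards [Icc_mem_nhds (show t₀ - 1 < t₀ by linarith) (show t₀ < t₀ + 1 by linarith)]
        with t ht
      refine Eventually.of_forall fun s hs => ?_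
      rw [uIoc_of_le zero_le_one] at hs
      rw [norm_mul]
      exact mul_le_mul_of_nonneg_left (hM (t, s) ⟨ht, hs.1.le, hs.2⟩) (norm_nonneg _)
    · exact hk.norm.mul_const M
    · refine Eventually.of_forall fun s hs => ?_
      fun_prop
  · intro t ht
    unfold lconv
    have h := intervalIntegral.smul_integral_comp_mul_left (a := 0) (b := 1)
      (fun τ => u (t - τ) * v τ) t
    simp only [mul_zero, mul_one, smul_eq_mul] at h
    rw [← h, Real.rpow_add ht, Real.rpow_one, mul_comm (t ^ (p + q)) t, mul_assoc]
    congr 1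
    rw [← intervalIntegral.integral_const_mul]
    refine intervalIntegral.integral_congr_Ioo_of_le zero_le_one fun s hs => ?_
    have h1 : 0 < 1 - s := sub_pos.2 hs.2
    rw [show t - t * s = t * (1 - s) by ring, hu _ (mul_pos ht h1), hv _ (mul_pos ht hs.1),
      Real.mul_rpow ht.le h1.le, Real.mul_rpow ht.le hs.1.le, Real.rpow_add ht]
    ring

lemma lconv_comm' (u v : ℝ → ℝ) : lconv u v = lconv v u := by
  funext t
  unfold lconv
  have := intervalIntegral.integral_comp_sub_left (a := 0) (b := t) (fun s => v (t - s) * u s) t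
  simp only [sub_self, sub_zero, sub_sub_cancel] at this
  rw [← this]
  simp only [mul_comm]

lemma lconv_congr {u u' v v' : ℝ → ℝ} (hu : ∀ t, 0 < t → u t = u' t)
    (hv : ∀ t, 0 < t → v t = v' t) {t : ℝ} (ht : 0 < t) : lconv u v t = lconv u' v' t := by
  unfold lconv
  refine intervalIntegral.integral_congr_Ioo_of_le ht.le fun s hs => ?_
  rw [hu _ (sub_pos.2 hs.2), hv _ hs.1]

/-- primitive -/
noncomputable def prim_s19 (u : ℝ → ℝ) : ℝ → ℝ := fun t => ∫ s in (0:ℝ)..t, u s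

lemma prim_Cm1 {u : ℝ → ℝ} (hu : Cm1 u) : Cm1 (prim_s19 u) := by
  refine (lconv_Cm1 (Cm1.of_const 1) hu).congr fun t _ => ?_
  simp [lconv, prim_s19]

lemma prim_hasDerivAt {u : ℝ → ℝ} (hu : Cm1 u) {t : ℝ} (ht : 0 < t) :
    HasDerivAt (prim_s19 u) (u t) t := by
  refine intervalIntegral.integral_hasDerivAt_right (hu.intervalIntegrable le_rfl ht.le) ?_
    (hu.continuousAt ht)
  exact ContinuousOn.stronglyMeasurableAtFilter isOpen_Ioi
    (fun s hs => (hu.continuousAt hs).continuousWithinAt) t (mem_Ioi.2 ht)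

lemma prim_tendsto {u : ℝ → ℝ} (hu : Cm1 u) : Tendsto (prim_s19 u) (𝓝[>] 0) (𝓝 0) := by
  have h := intervalIntegral.continuousOn_primitive_interval'
    (hu.intervalIntegrable le_rfl zero_le_one) (left_mem_uIcc)
  have h0 := h 0 left_mem_uIcc
  rw [uIcc_of_le zero_le_one] at h0
  have h1 : Tendsto (prim_s19 u) (𝓝[Icc 0 1] 0) (𝓝 (prim_s19 u 0)) := h0
  have e : prim_s19 u 0 = 0 := by simp [prim_s19]
  rw [e] at h1
  refine h1.mono_left ?_
  rw [← nhdsWithin_Ioo_eq_nhdsGT (zero_lt_one' ℝ)]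
  exact nhdsWithin_mono _ Ioo_subset_Icc_self

lemma eq_const_add_prim {g : ℝ → ℝ} (hd : ∀ t : ℝ, 0 < t → DifferentiableAt ℝ g t)
    (hg' : Cm1 (deriv g)) : ∃ c, ∀ t, 0 < t → g t = c + prim_s19 (deriv g) t := by
  refine ⟨g 1 - prim_s19 (deriv g) 1, fun t ht => ?_⟩
  have h := intervalIntegral.integral_eq_sub_of_hasDerivAt (a := 1) (b := t) (f := g)
    (f' := deriv g) (fun x hx => (hd x ?_).hasDerivAt)
    (hg'.intervalIntegrable zero_le_one ht.le)
  · have := intervalIntegral.integral_add_adjacent_intervals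
      (hg'.intervalIntegrable le_rfl zero_le_one) (hg'.intervalIntegrable zero_le_one ht.le)
    simp only [prim_s19]
    linarith
  · exact (lt_min one_pos ht).trans_le hx.1

lemma Cm1_of_deriv {g : ℝ → ℝ} (hd : ∀ t : ℝ, 0 < t → DifferentiableAt ℝ g t)
    (hg' : Cm1 (deriv g)) : Cm1 g := by
  obtain ⟨c, hc⟩ := eq_const_add_prim hd hg'
  exact ((Cm1.of_const c).add (prim_Cm1 hg')).congr hc

lemma Cm1_of_iter (m : ℕ) : ∀ f : ℝ → ℝ,
    (∀ j < m, ∀ t : ℝ, 0 < t → DifferentiableAt ℝ (iteratedDeriv j f) t) →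
    Cm1 (iteratedDeriv m f) → Cm1 f := by
  induction m with
  | zero => intro f _ h; simpa using h
  | succ m ih =>
    intro f hd h
    refine Cm1_of_deriv (fun t ht => by simpa using hd 0 (by omega) t ht) (ih _ ?_ ?_)
    · intro j hj t ht
      rw [← iteratedDeriv_succ']
      exact hd (j+1) (by omega) t ht
    · rwa [← iteratedDeriv_succ']

lemma lconv_prim {u v : ℝ → ℝ} (hu : Cm1 u) (hv : Cm1 v) {t : ℝ} (ht : 0 < t) :
    lconv (prim_s19 u) v t = prim_s19 (lconv u v) t := by
  set U := (Ioc 0 t).indicator u with hU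
  set V := (Ioc 0 t).indicator v with hV
  have iU : Integrable U := by
    rw [hU, integrable_indicator_iff measurableSet_Ioc]
    exact (hu.intervalIntegrable le_rfl ht.le).1
  have iV : Integrable V := by
    rw [hV, integrable_indicator_iff measurableSet_Ioc]
    exact (hv.intervalIntegrable le_rfl ht.le).1
  have hI : Integrable (Function.uncurry fun r s => V s * U (r - s))
      ((volume.restrict (Ioc 0 t)).prod volume) := by
    have := iV.convolution_integrand (ContinuousLinearMap.mul ℝ ℝ) iU
    have h2 := this.restrict (s := Ioc 0 t ×ˢ univ)
    rw [← Measure.prod_restrict, Measure.restrict_univ] at h2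
    exact h2
  have hs := integral_integral_swap hI
  have hL : prim_s19 (lconv u v) t = ∫ r in Ioc 0 t, ∫ s, V s * U (r - s) := by
    rw [prim_s19, intervalIntegral.integral_of_le ht.le]
    refine setIntegral_congr_fun measurableSet_Ioc fun r hr => ?_
    simp only [lconv]
    rw [intervalIntegral.integral_of_le hr.1.le, integral_Ioc_eq_integral_Ioo,
      ← integral_indicator measurableSet_Ioo]
    congr 1
    funext s
    have := hr.1
    have := hr.2
    simp only [hU, hV, indicator, mem_Ioo, mem_Ioc]
    by_cases h1 : 0 < s <;> by_cases h2 : s < r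
    · rw [if_pos ⟨h1, h2⟩, if_pos ⟨h1, by linarith⟩, if_pos ⟨by linarith, by linarith⟩, mul_comm]
    all_goals
      rw [if_neg (by tauto)]
      symm
    · rw [mul_eq_zero]; right; rw [if_neg]; rintro ⟨h, _⟩; linarith
    all_goals
      rw [mul_eq_zero]; left; rw [if_neg (by tauto)]
  have hR : lconv (prim_s19 u) v t = ∫ s, ∫ r in Ioc 0 t, V s * U (r - s) := by
    rw [lconv, intervalIntegral.integral_of_le ht.le, ← integral_indicator measurableSet_Ioc]
    congr 1
    funext s
    rw [integral_const_mul]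
    by_cases hs : s ∈ Ioc 0 t
    · rw [indicator_of_mem hs, hV, indicator_of_mem hs, mul_comm]
      congr 1
      rw [← intervalIntegral.integral_of_le ht.le, intervalIntegral.integral_comp_sub_right,
        intervalIntegral.integral_of_le (by linarith), hU, 
        setIntegral_indicator measurableSet_Ioc, prim_s19, 
        intervalIntegral.integral_of_le (by linarith [hs.2])]
      congr 2
      have := hs.1
      ext x
      simp only [mem_Ioc, mem_inter_iff]
      constructor
      · rintro ⟨h1, h2⟩; refine ⟨⟨?_, ?_⟩, ?_, ?_⟩ <;> linarith
      · rintro ⟨⟨h1, h2⟩, h3, h4⟩; exact ⟨h3, h2⟩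
    · rw [indicator_of_notMem hs, hV, indicator_of_notMem hs, zero_mul]
  rw [hL, hR, hs]

lemma lconv_eq_prim {f g : ℝ → ℝ} (hf : Cm1 f)
    (hg_diff : ∀ t : ℝ, 0 < t → DifferentiableAt ℝ g t)
    (hg' : Cm1 (deriv g)) :
    ∃ w, Cm1 w ∧ ∀ t, 0 < t → lconv f g t = prim_s19 w t := by
  obtain ⟨c, hc⟩ := eq_const_add_prim hg_diff hg'
  have hw1 := hf.const_mul c
  have hw2 := lconv_Cm1 hg' hf
  refine ⟨fun t => c * f t + lconv (deriv g) f t, hw1.add hw2, fun t ht => ?_⟩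
  have e : prim_s19 (fun t => c * f t + lconv (deriv g) f t) t
      = prim_s19 (fun t => c * f t) t + prim_s19 (lconv (deriv g) f) t :=
    intervalIntegral.integral_add (hw1.intervalIntegrable le_rfl ht.le)
      (hw2.intervalIntegrable le_rfl ht.le)
  rw [e, ← lconv_prim hg' hf ht, lconv_comm' f g, lconv_congr hc (fun _ _ => rfl) ht]
  have e2 : lconv (fun t => c + prim_s19 (deriv g) t) f t
      = (∫ s in (0:ℝ)..t, c * f s) + lconv (prim_s19 (deriv g)) f t := by
    unfold lconv
    rw [← intervalIntegral.integral_add (hw1.intervalIntegrable le_rfl ht.le)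
      (conv_int (prim_Cm1 hg') hf ht)]
    simp only [add_mul]
  exact e2

/-- one differentiation step -/
lemma step {h w : ℝ → ℝ} (hw : Cm1 w) (hh : ∀ t, 0 < t → h t = prim_s19 w t) :
    (∀ t, 0 < t → HasDerivAt h (w t) t) ∧ Tendsto h (𝓝[>] 0) (𝓝 0) := by
  refine ⟨fun t ht => ?_, ?_⟩
  · exact (prim_hasDerivAt hw ht).congr_of_eventuallyEq ((eventually_gt_nhds ht).mono hh)
  · refine (prim_tendsto hw).congr' ?_
    filter_upwards [self_mem_nhdsWithin] with t ht using (hh t ht).symm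

theorem statement19 (m : ℕ) (f g : ℝ → ℝ)
    (hf_diff : ∀ j < m, ∀ t : ℝ, 0 < t → DifferentiableAt ℝ (iteratedDeriv j f) t)
    (hfm : Cm1 (iteratedDeriv m f))
    (hf0 : ∀ j < m, Filter.Tendsto (iteratedDeriv j f)
      (nhdsWithin 0 (Set.Ioi 0)) (nhds 0))
    (hg_diff : ∀ t : ℝ, 0 < t → DifferentiableAt ℝ g t)
    (hg' : Cm1 (deriv g)) :
    (∀ j < m + 1, ∀ t : ℝ, 0 < t →
        DifferentiableAt ℝ (iteratedDeriv j (lconv f g)) t) ∧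
      Cm1 (iteratedDeriv (m + 1) (lconv f g)) ∧
      ∀ j < m + 1, Filter.Tendsto (iteratedDeriv j (lconv f g))
        (nhdsWithin 0 (Set.Ioi 0)) (nhds 0) := by
  induction m generalizing f with
  | zero =>
    rw [iteratedDeriv_zero] at hfm
    obtain ⟨w, hw, hh⟩ := lconv_eq_prim hfm hg_diff hg'
    obtain ⟨h1, h2⟩ := step hw hh
    refine ⟨?_, ?_, ?_⟩
    · intro j hj t ht
      obtain rfl : j = 0 := by omega
      rw [iteratedDeriv_zero]
      exact (h1 t ht).differentiableAt
    · rw [zero_add, iteratedDeriv_one]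
      exact hw.congr fun t ht => (h1 t ht).deriv
    · intro j hj
      obtain rfl : j = 0 := by omega
      rwa [iteratedDeriv_zero]
  | succ m ih =>
    have hd0 : ∀ t : ℝ, 0 < t → DifferentiableAt ℝ f t := fun t ht => by
      simpa using hf_diff 0 (by omega) t ht
    have ht0 : Tendsto f (𝓝[>] 0) (𝓝 0) := by simpa using hf0 0 (by omega)
    have hd1 : ∀ j < m, ∀ t : ℝ, 0 < t → DifferentiableAt ℝ (iteratedDeriv j (deriv f)) t := by
      intro j hj t ht
      rw [← iteratedDeriv_succ']
      exact hf_diff (j+1) (by omega) t ht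
    have hfm1 : Cm1 (iteratedDeriv m (deriv f)) := by rwa [← iteratedDeriv_succ']
    have hf' : Cm1 (deriv f) := Cm1_of_iter m _ hd1 hfm1
    obtain ⟨i1, i2, i3⟩ := ih (deriv f) hd1 hfm1 (fun j hj => by
      rw [← iteratedDeriv_succ']
      exact hf0 (j+1) (by omega))
    obtain ⟨c, hc⟩ := eq_const_add_prim hd0 hf'
    have hc0 : c = 0 := by
      have a1 : Tendsto (fun t => c + prim_s19 (deriv f) t) (𝓝[>] 0) (𝓝 (c + 0)) :=
        tendsto_const_nhds.add (prim_tendsto hf')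
      have a2 : Tendsto f (𝓝[>] 0) (𝓝 (c + 0)) := a1.congr' (by
        filter_upwards [self_mem_nhdsWithin] with t ht using (hc t ht).symm)
      have := tendsto_nhds_unique a2 ht0
      simpa using this
    subst hc0
    have hg1 : Cm1 g := Cm1_of_deriv hg_diff hg'
    have hh : ∀ t, 0 < t → lconv f g t = prim_s19 (lconv (deriv f) g) t := fun t ht => by
      rw [← lconv_prim hf' hg1 ht]
      exact lconv_congr (fun s hs => by rw [hc s hs, zero_add]) (fun _ _ => rfl) ht
    obtain ⟨h1, h2⟩ := step (lconv_Cm1 hf' hg1) hh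
    have key : ∀ j, EqOn (iteratedDeriv (j+1) (lconv f g)) (iteratedDeriv j (lconv (deriv f) g))
        (Ioi 0) := fun j => by
      rw [iteratedDeriv_succ']
      exact EqOn.iteratedDeriv_of_isOpen (fun t ht => (h1 t ht).deriv) isOpen_Ioi j
    refine ⟨?_, ?_, ?_⟩
    · intro j hj t ht
      cases j with
      | zero => rw [iteratedDeriv_zero]; exact (h1 t ht).differentiableAt
      | succ j =>
        exact (i1 j (by omega) t ht).congr_of_eventuallyEq
          ((eventually_gt_nhds ht).mono fun s hs => key j hs)
    · exact i2.congr fun t ht => key (m+1) ht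
    · intro j hj
      cases j with
      | zero => rwa [iteratedDeriv_zero]
      | succ j =>
        refine (i3 j (by omega)).congr' ?_
        filter_upwards [self_mem_nhdsWithin] with t ht using (key j ht).symm
end
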